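/- In the HTP-step setting, suppose additionally that l ∈ S ∩ S* and that the dominance factor satisfies γ > 2·√((1+δ)/(1−δ))·r', where r' = ‖x*_{S*\S}‖₂ / ‖x*_{S*\{l}}‖₂. Then |x_l| > |x_i| for every index i ∈ S \ S*. -/

import Mathlib

/-!
Write `u` for the part of `x*` outside `S` and `e` for the restriction of `x - x*` to `S`, so that
`x - x* = e - u`. The normal equations say that `A (x - x*)` is orthogonal to `A v` for all `v`
supported on `S`; hence `A e` is the orthogonal projection of `A u` and `‖A e‖ ≤ ‖A u‖`. The
restricted isometry property then gives `‖e‖ ≤ √((1+δ)/(1-δ)) ‖u‖`. For `i ∈ S \ S*` we have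
`x_i = e_i`, while `x_l = x*_l + e_l`, so `|x_i| < |x_l|` as soon as `2 ‖e‖ < |x*_l|`, which is what
the dominance condition provides.
-/

open Matrix Finset

/-- The support of a vector, as a `Finset`. -/
noncomputable def suppF {N : ℕ} (x : Fin N → ℝ) : Finset (Fin N) :=
  Finset.univ.filter fun i => x i ≠ 0

/-- The Euclidean norm of the restriction of `v` to the index set `T`. -/
noncomputable def pnorm {N : ℕ} (T : Finset (Fin N)) (v : Fin N → ℝ) : ℝ :=
  Real.sqrt (∑ i ∈ T, v i ^ 2)

lemma mulVec_eq_submatrix_mulVec {m N : ℕ} (A : Matrix (Fin m) (Fin N) ℝ) (S : Finset (Fin N))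
    (v : Fin N → ℝ) (hv : ∀ i, i ∉ S → v i = 0) :
    A.mulVec v = (A.submatrix id ((↑) : {i // i ∈ S} → Fin N)).mulVec (fun i => v i.1) := by
  funext r
  simp only [mulVec, dotProduct, submatrix_apply, id]
  rw [← Finset.sum_subset (Finset.subset_univ S)
    (fun j _ hj => by rw [hv j hj, mul_zero])]
  exact (Finset.sum_coe_sort S (fun j => A r j * v j)).symm

lemma card_suppF_le {N : ℕ} (S : Finset (Fin N)) (v : Fin N → ℝ) (hv : ∀ i, i ∉ S → v i = 0) :
    (suppF v).card ≤ S.card := by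
  apply Finset.card_le_card
  intro i hi
  by_contra h
  exact (Finset.mem_filter.1 hi).2 (hv i h)

/-- The Gram matrix of the columns in `S` is invertible when `A` is injective on vectors supported
on `S`. -/
lemma isUnit_gram {m N : ℕ} (A : Matrix (Fin m) (Fin N) ℝ) (S : Finset (Fin N))
    (hinj : ∀ v : Fin N → ℝ, (∀ i, i ∉ S → v i = 0) → A.mulVec v = 0 → v = 0) :
    IsUnit ((A.submatrix id ((↑) : {i // i ∈ S} → Fin N))ᵀ *
      A.submatrix id ((↑) : {i // i ∈ S} → Fin N)) := by
  set B := A.submatrix id ((↑) : {i // i ∈ S} → Fin N) with hB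
  rw [← Matrix.mulVec_injective_iff_isUnit]
  intro w₁ w₂ h
  have h0 : (Bᵀ * B).mulVec (w₁ - w₂) = 0 := by
    rw [mulVec_sub, sub_eq_zero]; exact h
  have h1 : B.mulVec (w₁ - w₂) = 0 := by
    rw [← dotProduct_self_eq_zero]
    have h2 : (w₁ - w₂) ⬝ᵥ ((Bᵀ * B).mulVec (w₁ - w₂)) = 0 := by rw [h0, dotProduct_zero]
    rwa [← mulVec_mulVec, dotProduct_mulVec, vecMul_transpose] at h2
  let v : Fin N → ℝ := fun j => if h : j ∈ S then (w₁ - w₂) ⟨j, h⟩ else 0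
  have hv : ∀ i, i ∉ S → v i = 0 := fun i hi => dif_neg hi
  have hvw : (fun i : {i // i ∈ S} => v i.1) = w₁ - w₂ := by
    funext i
    exact dif_pos i.2
  have hv0 : v = 0 := hinj v hv (by rw [mulVec_eq_submatrix_mulVec A S v hv, hvw, ← hB, h1])
  rw [← sub_eq_zero, ← hvw, hv0]
  rfl

/-- The least-squares residual is orthogonal to the image of every vector supported on `S`. -/
lemma residual_orthogonal {m N : ℕ} (A : Matrix (Fin m) (Fin N) ℝ) (S : Finset (Fin N))
    (b : Fin m → ℝ) (x : Fin N → ℝ)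
    (hU : IsUnit ((A.submatrix id ((↑) : {i // i ∈ S} → Fin N))ᵀ *
      A.submatrix id ((↑) : {i // i ∈ S} → Fin N)))
    (hx0 : ∀ i, i ∉ S → x i = 0)
    (hxls : ∀ i : {i // i ∈ S}, x i.1 =
      ((((A.submatrix id ((↑) : {i // i ∈ S} → Fin N))ᵀ *
          A.submatrix id ((↑) : {i // i ∈ S} → Fin N))⁻¹ *
        (A.submatrix id ((↑) : {i // i ∈ S} → Fin N))ᵀ).mulVec b) i)
    (v : Fin N → ℝ) (hv : ∀ i, i ∉ S → v i = 0) :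
    A.mulVec v ⬝ᵥ (A.mulVec x - b) = 0 := by
  rw [mulVec_eq_submatrix_mulVec A S v hv, mulVec_eq_submatrix_mulVec A S x hx0]
  set B := A.submatrix id ((↑) : {i // i ∈ S} → Fin N) with hB
  have hx : (fun i : {i // i ∈ S} => x i.1) = ((Bᵀ * B)⁻¹ * Bᵀ).mulVec b := funext hxls
  have hn : Bᵀ.mulVec (B.mulVec (fun i : {i // i ∈ S} => x i.1) - b) = 0 := by
    rw [hx, mulVec_sub, mulVec_mulVec, mulVec_mulVec, ← Matrix.mul_assoc,
      Matrix.mul_nonsing_inv _ ((Matrix.isUnit_iff_isUnit_det _).1 hU), Matrix.one_mul, sub_self]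
  rw [← vecMul_transpose, ← dotProduct_mulVec, hn, dotProduct_zero]

/-- HTP step: if `l ∈ S ∩ S*` and the dominance factor satisfies
`γ > 2·√((1+δ)/(1-δ))·r'`, then `|x_l| > |x_i|` for every `i ∈ S \ S*`. -/
theorem stmt16 (m N s : ℕ) (A : Matrix (Fin m) (Fin N) ℝ) (δ γ : ℝ)
    (hδ0 : 0 ≤ δ) (hδ1 : δ < 1) (hγ : 0 < γ)
    (hRIP : ∀ v : Fin N → ℝ, (suppF v).card ≤ s + 2 →
      (1 - δ) * (∑ i, v i ^ 2) ≤ (∑ r, (A.mulVec v r) ^ 2) ∧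
      (∑ r, (A.mulVec v r) ^ 2) ≤ (1 + δ) * (∑ i, v i ^ 2))
    (xs : Fin N → ℝ) (hxs : (suppF xs).card ≤ s)
    (S : Finset (Fin N)) (hScard : S.card = s)
    (x : Fin N → ℝ)
    (hx0 : ∀ i, i ∉ S → x i = 0)
    (hxls : ∀ i : {i // i ∈ S}, x i.1 =
      ((((A.submatrix id ((↑) : {i // i ∈ S} → Fin N))ᵀ *
          A.submatrix id ((↑) : {i // i ∈ S} → Fin N))⁻¹ *
        (A.submatrix id ((↑) : {i // i ∈ S} → Fin N))ᵀ).mulVec (A.mulVec xs)) i)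
    (l : Fin N) (hl : ∀ i, |xs i| ≤ |xs l|)
    (hne : pnorm ((suppF xs).erase l) xs ≠ 0)
    (hdom : γ * pnorm ((suppF xs).erase l) xs ≤ |xs l|)
    (hlmem : l ∈ S ∩ suppF xs)
    (hγbig : γ > 2 * Real.sqrt ((1 + δ) / (1 - δ)) *
      (pnorm (suppF xs \ S) xs / pnorm ((suppF xs).erase l) xs)) :
    ∀ i ∈ S \ suppF xs, |x i| < |x l| := by
  intro i hi
  obtain ⟨hiS, hiX⟩ := Finset.mem_sdiff.1 hi
  have hxi : xs i = 0 := by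
    by_contra h
    exact hiX (Finset.mem_filter.2 ⟨Finset.mem_univ _, h⟩)
  have hlS : l ∈ S := (Finset.mem_inter.1 hlmem).1
  have hδ : 0 < 1 - δ := by linarith
  have hU := isUnit_gram A S (fun v hv hAv => by
    have h := (hRIP v ((card_suppF_le S v hv).trans (by omega))).1
    rw [hAv] at h
    have h0 : ∑ j, v j ^ 2 ≤ 0 := by
      have : (1 - δ) * ∑ j, v j ^ 2 ≤ 0 := by simpa using h
      by_contra hc
      nlinarith [mul_pos hδ (not_le.1 hc)]
    funext j
    have hj := Finset.single_le_sum (f := fun j => v j ^ 2) (fun j _ => sq_nonneg (v j))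
      (Finset.mem_univ j)
    exact pow_eq_zero_iff two_ne_zero |>.1 (le_antisymm (hj.trans h0) (sq_nonneg _)))
  let e : Fin N → ℝ := fun j => if j ∈ S then x j - xs j else 0
  let u : Fin N → ℝ := fun j => if j ∈ S then 0 else xs j
  have he0 : ∀ j, j ∉ S → e j = 0 := fun j hj => if_neg hj
  have heu : x - xs = e - u := by
    funext j
    by_cases hj : j ∈ S
    · simp [e, u, hj]
    · simp [e, u, hj, hx0 j hj]
  have horth : ∑ r, A.mulVec e r * (A.mulVec e r - A.mulVec u r) = 0 := by
    have h := residual_orthogonal A S (A.mulVec xs) x hU hx0 hxls e he0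
    rw [← mulVec_sub, heu, mulVec_sub] at h
    exact h
  have hAeu : ∑ r, (A.mulVec e r) ^ 2 ≤ ∑ r, (A.mulVec u r) ^ 2 := by
    -- Termwise `a² - b² ≤ 2 a (a - b)`, and the right-hand sides sum to zero.
    have h : ∑ r, ((A.mulVec e r) ^ 2 - (A.mulVec u r) ^ 2) ≤
        ∑ r, 2 * (A.mulVec e r * (A.mulVec e r - A.mulVec u r)) :=
      Finset.sum_le_sum fun r _ => by nlinarith [sq_nonneg (A.mulVec e r - A.mulVec u r)]
    rw [← Finset.mul_sum, horth, Finset.sum_sub_distrib] at h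
    linarith
  have hu0 : ∀ j, j ∉ suppF xs → u j = 0 := by
    intro j hj
    have : xs j = 0 := by
      by_contra h
      exact hj (Finset.mem_filter.2 ⟨Finset.mem_univ _, h⟩)
    simp [u, this]
  have hu : ∑ j, u j ^ 2 = pnorm (suppF xs \ S) xs ^ 2 := by
    rw [pnorm, Real.sq_sqrt (Finset.sum_nonneg fun j _ => sq_nonneg _)]
    rw [← Finset.sum_subset (Finset.subset_univ (suppF xs \ S))]
    · exact Finset.sum_congr rfl fun j hj => by simp [u, (Finset.mem_sdiff.1 hj).2]
    · intro j _ hj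
      by_cases hjS : j ∈ S
      · simp [u, hjS]
      · rw [hu0 j fun h => hj (Finset.mem_sdiff.2 ⟨h, hjS⟩)]
        norm_num
  have h1 := (hRIP e ((card_suppF_le S e he0).trans (by omega))).1
  have h2 := (hRIP u ((card_suppF_le _ u hu0).trans (by omega))).2
  set R := Real.sqrt ((1 + δ) / (1 - δ)) * pnorm (suppF xs \ S) xs with hR
  have hR0 : 0 ≤ R := mul_nonneg (Real.sqrt_nonneg _) (Real.sqrt_nonneg _)
  have heR : ∑ j, e j ^ 2 ≤ R ^ 2 := by
    rw [hR, mul_pow, Real.sq_sqrt (by positivity), ← hu, div_mul_eq_mul_div, le_div_iff₀ hδ]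
    linarith
  have hcoord : ∀ j, |e j| ≤ R := fun j =>
    abs_le_of_sq_le_sq
      ((Finset.single_le_sum (f := fun j => e j ^ 2) (fun j _ => sq_nonneg (e j))
        (Finset.mem_univ j)).trans heR) hR0
  have hP : 0 < pnorm ((suppF xs).erase l) xs := lt_of_le_of_ne (Real.sqrt_nonneg _) hne.symm
  have hbig : 2 * R < |xs l| := by
    have h := mul_lt_mul_of_pos_right hγbig hP
    rw [mul_assoc, div_mul_cancel₀ _ hne, mul_assoc, ← hR] at h
    exact h.trans_le hdom
  have hei : e i = x i := by simp [e, hiS, hxi]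
  have hel : e l = x l - xs l := by simp [e, hlS]
  have hi' := hcoord i
  have hl' := hcoord l
  rw [hei] at hi'
  rw [hel, abs_sub_comm] at hl'
  have := abs_sub_abs_le_abs_sub (xs l) (x l)
  linarith
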